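/- Let m, n ≥ 1. Let A be an m×m real matrix with every row sum and column sum equal to a such that (A - (a/m)•J_m)^k = 0, and let Q be an n×n real matrix with every row sum and column sum equal to q such that (Q - (q/n)•J_n)^k = 0, where J_m and J_n are the all-ones matrices. Define the compound square C = J_n ⊗ A + Q ⊗ J_m, an (n·m)×(n·m) matrix. Then every row sum and every column sum of C equals L = n·a + m·q, and C^k = (L^k/(m·n))•J_{nm}, a constant matrix. In particular C has the one-nonzero-eigenvalue (1EV) property: C - (L/(m·n))•J_{nm} is nilpotent. -/

import Mathlib

open Matrix BigOperators Kronecker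

/-!
For matrices of size `d` let `E = (1/d) J`, which is idempotent. If `A` is doubly affine with
constant `a`, its centred part `N = A - a E` satisfies `N E = E N = 0`, so powers of `A = N + a E`
split as `N ^ k + a ^ k E`, and `N ^ k = 0` leaves only a multiple of `J`. Centring commutes with
compounding: the centred part of `J ⊗ A + Q ⊗ J` is `J ⊗ N + M ⊗ J`, with `N` and `M` the centred
parts of `A` and `Q`. These two summands annihilate each other too, so its `k`-th power is
`J ^ k ⊗ N ^ k + M ^ k ⊗ J ^ k = 0`.
-/

theorem add_pow_of_mul_eq_zero {R : Type*} [Semiring R] {x y : R} (hxy : x * y = 0)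
    (hyx : y * x = 0) {k : ℕ} (hk : k ≠ 0) : (x + y) ^ k = x ^ k + y ^ k := by
  obtain ⟨k, rfl⟩ := Nat.exists_eq_succ_of_ne_zero hk
  clear hk
  induction k with
  | zero => simp only [pow_one]
  | succ k ih =>
    have hxky : x ^ (k + 1) * y = 0 := by rw [pow_succ, mul_assoc, hxy, mul_zero]
    have hykx : y ^ (k + 1) * x = 0 := by rw [pow_succ, mul_assoc, hyx, mul_zero]
    rw [pow_succ, ih, add_mul, mul_add, mul_add, hxky, hykx, add_zero, zero_add, ← pow_succ,
      ← pow_succ]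

theorem kronecker_pow {R m n : Type*} [CommSemiring R] [Fintype m] [DecidableEq m] [Fintype n]
    [DecidableEq n] (A : Matrix m m R) (B : Matrix n n R) (k : ℕ) :
    (A ⊗ₖ B) ^ k = (A ^ k) ⊗ₖ (B ^ k) := by
  induction k with
  | zero => simp only [pow_zero, one_kronecker_one]
  | succ k ih => rw [pow_succ, ih, ← mul_kronecker_mul, ← pow_succ, ← pow_succ]

/-- The square matrix `J` indexed by `ι`, all of whose entries are `1`. -/
def allOnes (ι R : Type*) [One R] : Matrix ι ι R :=
  Matrix.of fun _ _ => 1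

@[simp]
theorem allOnes_apply {ι R : Type*} [One R] (i j : ι) : allOnes ι R i j = 1 :=
  rfl

theorem mul_allOnes_of_row_sum {ι R : Type*} [Fintype ι] [NonAssocSemiring R] {A : Matrix ι ι R}
    {a : R} (hA : ∀ i, ∑ j, A i j = a) : A * allOnes ι R = a • allOnes ι R := by
  ext i j
  simp only [mul_apply, Matrix.smul_apply, allOnes_apply, mul_one, hA, smul_eq_mul]

theorem allOnes_mul_of_col_sum {ι R : Type*} [Fintype ι] [NonAssocSemiring R] {A : Matrix ι ι R}
    {a : R} (hA : ∀ j, ∑ i, A i j = a) : allOnes ι R * A = a • allOnes ι R := by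
  ext i j
  simp only [mul_apply, Matrix.smul_apply, allOnes_apply, one_mul, mul_one, hA, smul_eq_mul]

/-- A square matrix is doubly affine with magic constant `a` if every row and every column
sums to `a`. -/
structure IsDoublyAffine {ι R : Type*} [Fintype ι] [AddCommMonoid R] (A : Matrix ι ι R) (a : R) :
    Prop where
  row_sum (i : ι) : ∑ j, A i j = a
  col_sum (j : ι) : ∑ i, A i j = a

theorem isDoublyAffine_allOnes (ι R : Type*) [Fintype ι] [NonAssocSemiring R] :
    IsDoublyAffine (allOnes ι R) (Fintype.card ι : R) where
  row_sum _ := by simp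
  col_sum _ := by simp

namespace IsDoublyAffine

variable {ι κ R : Type*} [Fintype ι] [Fintype κ]

theorem add [AddCommMonoid R] {A B : Matrix ι ι R} {a b : R} (hA : IsDoublyAffine A a)
    (hB : IsDoublyAffine B b) : IsDoublyAffine (A + B) (a + b) where
  row_sum i := by simp only [Matrix.add_apply, Finset.sum_add_distrib, hA.row_sum, hB.row_sum]
  col_sum j := by simp only [Matrix.add_apply, Finset.sum_add_distrib, hA.col_sum, hB.col_sum]

theorem kronecker [NonUnitalNonAssocSemiring R] {A : Matrix ι ι R} {B : Matrix κ κ R} {a b : R}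
    (hA : IsDoublyAffine A a) (hB : IsDoublyAffine B b) : IsDoublyAffine (A ⊗ₖ B) (a * b) where
  row_sum i := by
    simp only [kroneckerMap_apply, Fintype.sum_prod_type, ← Finset.sum_mul_sum, hA.row_sum,
      hB.row_sum]
  col_sum j := by
    simp only [kroneckerMap_apply, Fintype.sum_prod_type, ← Finset.sum_mul_sum, hA.col_sum,
      hB.col_sum]

theorem sub_div_card_smul_allOnes [Field R] {A : Matrix ι ι R} {a : R} (hA : IsDoublyAffine A a)
    (hι : (Fintype.card ι : R) ≠ 0) :
    IsDoublyAffine (A - (a / Fintype.card ι) • allOnes ι R) 0 where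
  row_sum i := by simp [Finset.sum_sub_distrib, hA.row_sum, mul_div_cancel₀ a hι]
  col_sum j := by simp [Finset.sum_sub_distrib, hA.col_sum, mul_div_cancel₀ a hι]

end IsDoublyAffine

section AllOnesPow

variable {ι K : Type*} [Fintype ι] [Field K]

theorem isIdempotentElem_inv_card_smul_allOnes (hι : (Fintype.card ι : K) ≠ 0) :
    IsIdempotentElem ((Fintype.card ι : K)⁻¹ • allOnes ι K) := by
  rw [IsIdempotentElem, smul_mul_smul_comm,
    mul_allOnes_of_row_sum (isDoublyAffine_allOnes ι K).row_sum, smul_smul, mul_assoc,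
    inv_mul_cancel₀ hι, mul_one]

theorem div_card_smul_allOnes_pow [DecidableEq ι] (hι : (Fintype.card ι : K) ≠ 0) (a : K) {k : ℕ}
    (hk : k ≠ 0) :
    ((a / Fintype.card ι) • allOnes ι K) ^ k = (a ^ k / Fintype.card ι) • allOnes ι K := by
  rw [div_eq_mul_inv, div_eq_mul_inv, mul_smul, mul_smul, smul_pow,
    (isIdempotentElem_inv_card_smul_allOnes hι).pow_eq hk]

theorem IsDoublyAffine.pow_eq_smul_allOnes [DecidableEq ι] {A : Matrix ι ι K} {a : K} {k : ℕ}
    (hA : IsDoublyAffine A a) (hι : (Fintype.card ι : K) ≠ 0)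
    (hnil : (A - (a / Fintype.card ι) • allOnes ι K) ^ k = 0) :
    A ^ k = (a ^ k / Fintype.card ι) • allOnes ι K := by
  rcases eq_or_ne k 0 with rfl | hk
  · have := subsingleton_of_zero_eq_one ((pow_zero _).symm.trans hnil).symm
    exact Subsingleton.elim _ _
  set P := (a / Fintype.card ι) • allOnes ι K with hP
  have hN : IsDoublyAffine (A - P) 0 := hA.sub_div_card_smul_allOnes hι
  have hNP : (A - P) * P = 0 := by
    nth_rw 2 [hP]
    rw [mul_smul_comm, mul_allOnes_of_row_sum hN.row_sum, zero_smul, smul_zero]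
  have hPN : P * (A - P) = 0 := by
    nth_rw 1 [hP]
    rw [smul_mul_assoc, allOnes_mul_of_col_sum hN.col_sum, zero_smul, smul_zero]
  calc A ^ k = (A - P + P) ^ k := by rw [sub_add_cancel]
    _ = (A - P) ^ k + P ^ k := add_pow_of_mul_eq_zero hNP hPN hk
    _ = (a ^ k / Fintype.card ι) • allOnes ι K := by
      rw [hnil, zero_add, hP, div_card_smul_allOnes_pow hι a hk]

end AllOnesPow

/-- The compound `J ⊗ A + Q ⊗ J` of two square matrices: an array of translated copies of `A`,
the block in position `(r, s)` being shifted by the entry `Q r s`. -/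
def compound {m n R : Type*} [NonAssocSemiring R] (A : Matrix m m R) (Q : Matrix n n R) :
    Matrix (n × m) (n × m) R :=
  allOnes n R ⊗ₖ A + Q ⊗ₖ allOnes m R

section Compound

variable {m n R : Type*}

theorem compound_sub_smul_allOnes [Ring R] (A : Matrix m m R) (Q : Matrix n n R) (c d : R) :
    compound (A - c • allOnes m R) (Q - d • allOnes n R) =
      compound A Q - (c + d) • allOnes (n × m) R := by
  ext i j
  simp only [compound, Matrix.add_apply, Matrix.sub_apply, Matrix.smul_apply, kroneckerMap_apply,
    allOnes_apply, one_mul, mul_one, smul_eq_mul]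
  abel

theorem IsDoublyAffine.compound [Fintype m] [Fintype n] [CommSemiring R] {A : Matrix m m R}
    {Q : Matrix n n R} {a q : R} (hA : IsDoublyAffine A a) (hQ : IsDoublyAffine Q q) :
    IsDoublyAffine (compound A Q) (Fintype.card n * a + Fintype.card m * q) := by
  rw [mul_comm (Fintype.card m : R) q]
  exact ((isDoublyAffine_allOnes n R).kronecker hA).add (hQ.kronecker (isDoublyAffine_allOnes m R))

theorem compound_pow_eq_zero [Fintype m] [DecidableEq m] [Fintype n] [DecidableEq n]
    [CommSemiring R] {X : Matrix m m R} {Y : Matrix n n R} (hXJ : X * allOnes m R = 0)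
    (hYJ : Y * allOnes n R = 0) {k : ℕ} (hX : X ^ k = 0) (hY : Y ^ k = 0) :
    compound X Y ^ k = 0 := by
  rcases eq_or_ne k 0 with rfl | hk
  · rw [pow_zero] at hX ⊢
    rw [← one_kronecker_one, hX, kronecker_zero]
  have hXY : (allOnes n R ⊗ₖ X) * (Y ⊗ₖ allOnes m R) = 0 := by
    rw [← mul_kronecker_mul, hXJ, kronecker_zero]
  have hYX : (Y ⊗ₖ allOnes m R) * (allOnes n R ⊗ₖ X) = 0 := by
    rw [← mul_kronecker_mul, hYJ, zero_kronecker]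
  rw [compound, add_pow_of_mul_eq_zero hXY hYX hk, kronecker_pow, kronecker_pow, hX, hY,
    kronecker_zero, zero_kronecker, add_zero]

end Compound

theorem compound_square_doubly_affine_1EV_general {m n K : Type*} [Fintype m] [DecidableEq m]
    [Fintype n] [DecidableEq n] [Field K] (hm : (Fintype.card m : K) ≠ 0)
    (hn : (Fintype.card n : K) ≠ 0) {A : Matrix m m K} {Q : Matrix n n K} {a q L : K} {k : ℕ}
    (hA : IsDoublyAffine A a) (hQ : IsDoublyAffine Q q)
    (hAnil : (A - (a / Fintype.card m) • allOnes m K) ^ k = 0)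
    (hQnil : (Q - (q / Fintype.card n) • allOnes n K) ^ k = 0)
    (hL : L = Fintype.card n * a + Fintype.card m * q) :
    IsDoublyAffine (compound A Q) L ∧
      compound A Q ^ k = (L ^ k / (Fintype.card m * Fintype.card n)) • allOnes (n × m) K ∧
      (compound A Q - (L / (Fintype.card m * Fintype.card n)) • allOnes (n × m) K) ^ k = 0 := by
  have hC : IsDoublyAffine (compound A Q) L := hL ▸ hA.compound hQ
  have hcard : (Fintype.card (n × m) : K) = Fintype.card m * Fintype.card n := by
    rw [Fintype.card_prod, Nat.cast_mul, mul_comm]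
  have hmean : a / Fintype.card m + q / Fintype.card n =
      L / (Fintype.card m * Fintype.card n) := by
    rw [hL, div_add_div _ _ hm hn, mul_comm a]
  have hAJ : (A - (a / Fintype.card m) • allOnes m K) * allOnes m K = 0 := by
    rw [mul_allOnes_of_row_sum (hA.sub_div_card_smul_allOnes hm).row_sum, zero_smul]
  have hQJ : (Q - (q / Fintype.card n) • allOnes n K) * allOnes n K = 0 := by
    rw [mul_allOnes_of_row_sum (hQ.sub_div_card_smul_allOnes hn).row_sum, zero_smul]
  have hCnil : (compound A Q - (L / (Fintype.card m * Fintype.card n)) •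
      allOnes (n × m) K) ^ k = 0 := by
    rw [← hmean, ← compound_sub_smul_allOnes]
    exact compound_pow_eq_zero hAJ hQJ hAnil hQnil
  rw [← hcard] at hCnil ⊢
  exact ⟨hC, hC.pow_eq_smul_allOnes (hcard ▸ mul_ne_zero hm hn) hCnil, hCnil⟩

/-- The compound square `C = J_n ⊗ A + Q ⊗ J_m` of doubly-affine
squares `A` (constant `a`, nilpotent part of index ≤ k) and `Q` (constant `q`,
nilpotent part of index ≤ k) is doubly affine with magic constant
`L = n·a + m·q`, satisfies `C ^ k = (L^k/(m·n)) • J_{nm}`, and has the 1EV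
property: `C - (L/(m·n)) • J_{nm}` is nilpotent. -/
theorem compound_square_doubly_affine_1EV {m n k : ℕ} (hm : 1 ≤ m) (hn : 1 ≤ n)
    (A : Matrix (Fin m) (Fin m) ℝ) (a : ℝ)
    (Q : Matrix (Fin n) (Fin n) ℝ) (q : ℝ)
    (hArow : ∀ i, ∑ j, A i j = a) (hAcol : ∀ j, ∑ i, A i j = a)
    (hQrow : ∀ i, ∑ j, Q i j = q) (hQcol : ∀ j, ∑ i, Q i j = q)
    (Jm : Matrix (Fin m) (Fin m) ℝ) (hJm : Jm = Matrix.of fun _ _ => (1 : ℝ))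
    (Jn : Matrix (Fin n) (Fin n) ℝ) (hJn : Jn = Matrix.of fun _ _ => (1 : ℝ))
    (Jnm : Matrix (Fin n × Fin m) (Fin n × Fin m) ℝ)
    (hJnm : Jnm = Matrix.of fun _ _ => (1 : ℝ))
    (hAnil : (A - (a / m) • Jm) ^ k = 0)
    (hQnil : (Q - (q / n) • Jn) ^ k = 0)
    (C : Matrix (Fin n × Fin m) (Fin n × Fin m) ℝ)
    (hC : C = Jn ⊗ₖ A + Q ⊗ₖ Jm)
    (L : ℝ) (hL : L = n * a + m * q) :
    (∀ i, ∑ j, C i j = L) ∧ (∀ j, ∑ i, C i j = L) ∧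
    C ^ k = (L ^ k / (m * n)) • Jnm ∧
    IsNilpotent (C - (L / (m * n)) • Jnm) := by
  subst hJm hJn hJnm hC
  have ⟨hC, hpow, hnil⟩ := compound_square_doubly_affine_1EV_general (L := L) (k := k)
    (by simpa using Nat.one_le_iff_ne_zero.mp hm) (by simpa using Nat.one_le_iff_ne_zero.mp hn)
    ⟨hArow, hAcol⟩ ⟨hQrow, hQcol⟩ (by rwa [Fintype.card_fin]) (by rwa [Fintype.card_fin])
    (by rwa [Fintype.card_fin, Fintype.card_fin])
  simp only [Fintype.card_fin] at hpow hnil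
  exact ⟨hC.row_sum, hC.col_sum, hpow, k, hnil⟩
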